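/- Fix q ∈ (0,1), let μ be a finitely supported probability measure on I, and set λ = Σ_r μ(r)·dim(r)/dim_q(r). Then for every n ≥ 0 and all s,t ∈ I, the n-step transition kernel satisfies p_μ⁽ⁿ⁾(s,t) ≤ λⁿ·dim_q(t)/dim_q(s). In particular, if μ(e) < 1 then λ < 1 and the spectral radius lim sup_n p_μ⁽ⁿ⁾(s,s)^{1/n} is at most λ for every s ∈ I. (Lemma 4.1 together with the subsequent Remark of the paper.) -/

import Mathlib

open scoped ENNReal

namespace Paper

/-- Words in the two letters `α, β`: the free monoid on two generators, as `List Bool`.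
The head of the list is the leftmost letter. -/
abbrev Word := List Bool

/-- Length of the longest common prefix of two lists. -/
def lcpLen : List Bool → List Bool → ℕ
  | a :: s, b :: t => if a = b then lcpLen s t + 1 else 0
  | _, _ => 0

/-- Length of the longest common suffix of two words. -/
def lcsLen (s t : Word) : ℕ := lcpLen s.reverse t.reverse

/-- The tree metric on `Word`: `d(s,t) = (|s| - k) + (|t| - k)`, `k` the length of the
longest common suffix. -/
def treeDist (s t : Word) : ℕ := (s.length - lcsLen s t) + (t.length - lcsLen s t)

/-- The branch `Δ_x = {u x : u ∈ I}` of words having `x` as a suffix. -/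
def Delta (x : Word) : Set Word := {s | x <:+ s}

/-- The geodesic segment `[s,t] = {v : d(s,v) + d(v,t) = d(s,t)}`. -/
def geodesic (s t : Word) : Set Word := {v | treeDist s v + treeDist v t = treeDist s t}

/-- Paths of `n` steps from `s` to `t` staying in `Ω`. -/
def pathSet {X : Type*} (Ω : Set X) (n : ℕ) (s t : X) : Set (Fin (n + 1) → X) :=
  {σ | σ 0 = s ∧ σ (Fin.last n) = t ∧ ∀ i, σ i ∈ Ω}

/-- The weight `∏ a(s_i, s_{i+1})` of a path, as an extended nonnegative real. -/
noncomputable def weightE {X : Type*} (a : X → X → ℝ) (n : ℕ) (σ : Fin (n + 1) → X) : ℝ≥0∞ :=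
  ∏ i : Fin n, ENNReal.ofReal (a (σ i.castSucc) (σ i.succ))

/-- The `n`-step kernel `a⁽ⁿ⁾(s,t)` of the kernel `a` on `Ω`, with values in `[0,∞]`. -/
noncomputable def nStepE {X : Type*} (Ω : Set X) (a : X → X → ℝ) (n : ℕ) (s t : X) : ℝ≥0∞ :=
  ∑' σ : pathSet Ω n s t, weightE a n σ.1

/-- The Green kernel `G_a(s,t) = Σ_n a⁽ⁿ⁾(s,t)` of `a` on `Ω`, with values in `[0,∞]`. -/
noncomputable def greenE {X : Type*} (Ω : Set X) (a : X → X → ℝ) (s t : X) : ℝ≥0∞ :=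
  ∑' n : ℕ, nStepE Ω a n s t

/-- The weight of a path, real version (for signed kernels). -/
noncomputable def weightR {X : Type*} (a : X → X → ℝ) (n : ℕ) (σ : Fin (n + 1) → X) : ℝ :=
  ∏ i : Fin n, a (σ i.castSucc) (σ i.succ)

/-- The `n`-step kernel of a signed kernel `a` on `Ω`. -/
noncomputable def nStepR {X : Type*} (Ω : Set X) (a : X → X → ℝ) (n : ℕ) (s t : X) : ℝ :=
  ∑' σ : pathSet Ω n s t, weightR a n σ.1

/-- The Green kernel of a signed kernel `a` on `Ω`, as a real number. -/
noncomputable def greenR {X : Type*} (Ω : Set X) (a : X → X → ℝ) (s t : X) : ℝ :=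
  ∑' n : ℕ, nStepR Ω a n s t

/-- The Green kernel of `|a|`: finiteness of this expresses absolute convergence of the
series defining the Green kernel of `a`. -/
noncomputable def greenAbs {X : Type*} (Ω : Set X) (a : X → X → ℝ) (s t : X) : ℝ≥0∞ :=
  greenE Ω (fun u v => |a u v|) s t

/-- (H1): finite range `S`. -/
def H1 (p : Word → Word → ℝ) (S : ℕ) : Prop := ∀ s t, S < treeDist s t → p s t = 0

/-- (H2): nonzero transition probabilities are bounded below by `δ₀`. -/
def H2 (p : Word → Word → ℝ) (δ₀ : ℝ) : Prop := ∀ s t, 0 < p s t → δ₀ ≤ p s t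

/-- (H3): uniform irreducibility. -/
def H3 (p : Word → Word → ℝ) (δ₀ : ℝ) (K : ℕ) : Prop :=
  ∀ s t, treeDist s t = 1 → ∃ k ≤ K, ∃ u : ℕ → Word, u 0 = s ∧ u k = t ∧
    ∀ i < k, ∀ x : Word, δ₀ ≤ p (u i ++ x) (u (i + 1) ++ x)

/-- The operator `(Pf)(s) = Σ_t p(s,t) f(t)` extends to a bounded operator of norm at most
`lam` on `ℓ²(X, m)`, expressed via the associated bilinear form on finitely supported
functions. -/
def opNormBound {X : Type*} (m : X → ℝ) (p : X → X → ℝ) (lam : ℝ) : Prop :=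
  ∀ f g : X → ℝ, (Function.support f).Finite → (Function.support g).Finite →
    |∑' s, m s * g s * ∑' t, p s t * f t| ≤
      lam * Real.sqrt (∑' x, m x * f x ^ 2) * Real.sqrt (∑' x, m x * g x ^ 2)

/-- (H4): there is a weight `m` for which `P` is bounded of norm at most `lam` on `ℓ²(I,m)`. -/
def H4 (p : Word → Word → ℝ) (m : Word → ℝ) (lam : ℝ) : Prop :=
  (∀ x, 0 < m x) ∧ opNormBound m p lam

/-- Substochasticity: `Σ_t p(s,t) ≤ 1` for every `s`. -/
def Substochastic (p : Word → Word → ℝ) : Prop :=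
  ∀ s, (∑' t, ENNReal.ofReal (p s t)) ≤ 1

/-- `b` is a `q`-perturbation of `p` on `Δ_z` (with constant `C`). -/
def Perturb (p b : Word → Word → ℝ) (z : Word) (q C : ℝ) : Prop :=
  ∀ s t, s ∈ Delta z → t ∈ Delta z →
    |b s t| ≤ p s t ∧ |b s t - p s t| ≤ C * q ^ s.length

/-- The word `ω|k = ω(k-1) ω(k-2) ⋯ ω(0)` of length `k` determined by an end `ω`. -/
def endWord (ω : ℕ → Bool) (k : ℕ) : Word := (List.range k).reverse.map ω

/-- The last-entrance kernel `M_p(s,u)`: sum over paths from `s` to `u` of length at least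
one whose second-to-last point lies outside `Δ_x`. -/
noncomputable def lastEnter (p : Word → Word → ℝ) (x s u : Word) : ℝ≥0∞ :=
  ∑' m : ℕ, ∑' σ : {σ : Fin (m + 2) → Word //
      σ ∈ pathSet Set.univ (m + 1) s u ∧ σ ((Fin.last m).castSucc) ∉ Delta x},
    weightE p (m + 1) σ.1

/-- The quantum integer `[n]_q = (q⁻ⁿ - qⁿ)/(q⁻¹ - q)`. -/
noncomputable def qInt (q : ℝ) (n : ℕ) : ℝ := (q ^ (-(n : ℤ)) - q ^ (n : ℤ)) / (q⁻¹ - q)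

/-- The lengths of the blocks in the canonical factorization of a word into maximal
alternating subwords. -/
def blockLens : Word → List ℕ
  | [] => []
  | [_] => [1]
  | a :: b :: rest =>
    match blockLens (b :: rest) with
    | [] => [1]
    | k :: ks => if a = b then 1 :: (k :: ks) else (k + 1) :: ks

/-- The quantum dimension `dim_q(x) = Π_i [|x_i| + 1]_q` over the blocks of `x`. -/
noncomputable def dimq (q : ℝ) (x : Word) : ℝ := ((blockLens x).map fun L => qInt q (L + 1)).prod

/-- The classical dimension `dim(x) = Π_i (|x_i| + 1)` over the blocks of `x`. -/
noncomputable def dimn (x : Word) : ℝ := ((blockLens x).map fun L => (L + 1 : ℝ)).prod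

/-- The involution `x ↦ x̄`: reverse the word and exchange the two letters. -/
def bar (x : Word) : Word := (x.map fun a => !a).reverse

/-- The fusion multiplicity `mᵗ_{r,s}`: the number of words `z` such that `r = r₀ z`,
`s = z̄ s₀`, `t = r₀ s₀` for some `r₀, s₀`. -/
noncomputable def fuse (r s t : Word) : ℕ :=
  {z : Word | ∃ r₀ s₀ : Word, r = r₀ ++ z ∧ s = bar z ++ s₀ ∧ t = r₀ ++ s₀}.ncard

/-- A finitely supported probability measure on `Word`. -/
def IsProbMeasure (μ : Word → ℝ) : Prop :=
  (∀ x, 0 ≤ μ x) ∧ (Function.support μ).Finite ∧ ∑' x, μ x = 1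

/-- The transition kernel `p_μ(s,t) = Σ_r μ(r) mᵗ_{r,s} dim_q(t)/(dim_q(r) dim_q(s))`. -/
noncomputable def pMu (q : ℝ) (μ : Word → ℝ) (s t : Word) : ℝ :=
  ∑' r, μ r * (fuse r s t : ℝ) * dimq q t / (dimq q r * dimq q s)

/-- The `q`-binomial coefficient. -/
noncomputable def qbinom (q : ℝ) (n k : ℕ) : ℝ :=
  q ^ (-((k * (n - k) : ℕ) : ℤ)) *
    ∏ i ∈ Finset.range k, (1 - q ^ (2 * (n - i))) / (1 - q ^ (2 * (k - i)))


section helpers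

/-! #### Dimension functions -/

lemma dimn_eq (x : Word) :
    dimn x = ((blockLens x).map fun L : ℕ => (L + 1 : ℝ)).prod := by
  unfold dimn
  congr 1
  generalize blockLens x = l
  induction l with
  | nil => rfl
  | cons a l ih => simpa using ih

lemma dimn_nil : dimn [] = 1 := by simp [dimn_eq, blockLens]

lemma dimn_single (c : Bool) : dimn [c] = 2 := by
  simp [dimn_eq, blockLens]; norm_num

lemma block_cons (x : Word) : ∀ d : Bool, ∃ k ks, blockLens (d :: x) = k :: ks ∧ 1 ≤ k ∧
    dimn x = (k : ℝ) * (ks.map fun L : ℕ => (L + 1 : ℝ)).prod ∧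
    (x ≠ [] → ∀ L ∈ ks, L ∈ blockLens x) := by
  induction x with
  | nil => intro d; exact ⟨1, [], by simp [blockLens], le_refl _, by simp [dimn_eq, blockLens], by simp⟩
  | cons e y ih =>
    intro d
    obtain ⟨k, ks, h, hk, h2, -⟩ := ih e
    by_cases hde : d = e
    · refine ⟨1, k :: ks, ?_, le_refl _, ?_, ?_⟩
      · rw [blockLens, h]; simp [hde]
      · simp [dimn_eq, h]
      · intro _ L hL; rw [h]; exact hL
    · refine ⟨k + 1, ks, ?_, by omega, ?_, ?_⟩
      · rw [blockLens, h]; simp [hde]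
      · simp [dimn_eq, h]
      · intro _ L hL; rw [h]; exact List.mem_cons_of_mem _ hL

lemma block_pos (x : Word) : ∀ L ∈ blockLens x, 1 ≤ L := by
  induction x with
  | nil => simp [blockLens]
  | cons d x ih =>
    obtain ⟨k, ks, h, hk, -, h3⟩ := block_cons x d
    intro L hL
    rw [h] at hL
    rcases List.mem_cons.1 hL with rfl | hL
    · exact hk
    · by_cases hx : x = []
      · subst hx
        simp [blockLens] at h
        rw [h.2] at hL; simp at hL
      · exact ih L (h3 hx L hL)

lemma dimn_rec (c d : Bool) (x : Word) :
    dimn (c :: d :: x) = 2 * dimn (d :: x) - if d = !c then dimn x else 0 := by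
  obtain ⟨k, ks, h, hk, h2, -⟩ := block_cons x d
  by_cases hcd : c = d
  · have h1 : dimn (c :: d :: x) = 2 * dimn (d :: x) := by
      simp only [dimn_eq]
      rw [blockLens, h]; simp [hcd]; norm_num
    rw [h1]; subst hcd; cases c <;> simp
  · have : d = !c := by cases c <;> cases d <;> simp_all
    rw [if_pos this, h2]
    simp only [dimn_eq]
    rw [blockLens, h]; simp [hcd]; ring

lemma dimn_glue (c d : Bool) (s : Word) : ∀ r : Word,
    dimn (r ++ c :: d :: s) = dimn (r ++ [c]) * dimn (d :: s)
      - if d = !c then dimn r * dimn s else 0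
  | [] => by
    simp only [List.nil_append, dimn_rec, dimn_single, dimn_nil, one_mul]
  | [a] => by
    simp only [List.nil_append, List.cons_append, dimn_rec, dimn_single, dimn_nil]
    split_ifs <;> ring
  | a :: b :: r => by
    have h1 := dimn_glue c d s (b :: r)
    have h2 := dimn_glue c d s r
    simp only [List.cons_append] at h1 ⊢
    rw [dimn_rec a b (r ++ c :: d :: s), dimn_rec a b (r ++ [c]), dimn_rec a b r, h1, h2]
    split_ifs <;> ring

lemma dimn_bar : ∀ r : Word, dimn (bar r) = dimn r
  | [] => by simp [bar]
  | [a] => by simp [bar, dimn_single]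
  | a :: b :: r => by
    have h1 := dimn_bar (b :: r)
    have h2 := dimn_bar r
    have e1 : bar (b :: r) = bar r ++ [!b] := by simp [bar]
    have e2 : bar (a :: b :: r) = bar r ++ [!b, !a] := by simp [bar]
    rw [e1] at h1
    rw [e2, dimn_glue, h1, h2, dimn_rec, dimn_single, dimn_nil]
    cases a <;> cases b <;> simp <;> ring

lemma dimn_pos (x : Word) : 0 < dimn x := by
  rw [dimn_eq]
  apply List.prod_pos
  intro a ha
  obtain ⟨L, -, rfl⟩ := List.mem_map.1 ha
  positivity

lemma qInt_one (q : ℝ) (hq : q ∈ Set.Ioo (0 : ℝ) 1) : qInt q 1 = 1 := by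
  have : q⁻¹ - q ≠ 0 := by
    have := (one_lt_inv₀ hq.1).2 hq.2
    have := hq.2
    linarith
  simp [qInt, div_self this]

lemma qInt_succ (q : ℝ) (hq : q ∈ Set.Ioo (0 : ℝ) 1) (n : ℕ) :
    qInt q (n + 1) = (q + q⁻¹) / 2 * qInt q n + (q ^ n + (q ^ n)⁻¹) / 2 := by
  have h0 : q ≠ 0 := hq.1.ne'
  have h1 : q⁻¹ - q ≠ 0 := by
    have := (one_lt_inv₀ hq.1).2 hq.2
    have := hq.2
    linarith
  simp only [qInt, zpow_neg, zpow_natCast]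
  rw [div_eq_iff h1, add_mul, mul_assoc, div_mul_cancel₀ _ h1, pow_succ, mul_inv]
  ring

lemma amgm (x : ℝ) (hx : 0 < x) : 1 ≤ (x + x⁻¹) / 2 := by
  have : x * x⁻¹ = 1 := mul_inv_cancel₀ hx.ne'
  have h2 : 0 < x⁻¹ := inv_pos.2 hx
  nlinarith [sq_nonneg (x - x⁻¹)]

lemma amgm_lt (x : ℝ) (hx : 0 < x) (h1 : x < 1) : 1 < (x + x⁻¹) / 2 := by
  have : x * x⁻¹ = 1 := mul_inv_cancel₀ hx.ne'
  have h2 : 1 < x⁻¹ := (one_lt_inv₀ hx).2 h1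
  nlinarith [mul_pos (sub_pos.2 h1) (sub_pos.2 h2)]

lemma qInt_ge (q : ℝ) (hq : q ∈ Set.Ioo (0 : ℝ) 1) (n : ℕ) : (n + 1 : ℝ) ≤ qInt q (n + 1) := by
  induction n with
  | zero => simp [qInt_one q hq]
  | succ n ih =>
    rw [qInt_succ q hq]
    have h1 := amgm (q ^ (n + 1)) (pow_pos hq.1 _)
    have h2 := amgm q hq.1
    have : (0 : ℝ) ≤ n := n.cast_nonneg
    push_cast
    nlinarith

lemma qInt_gt (q : ℝ) (hq : q ∈ Set.Ioo (0 : ℝ) 1) (n : ℕ) (hn : 1 ≤ n) :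
    (n + 1 : ℝ) < qInt q (n + 1) := by
  obtain ⟨n, rfl⟩ : ∃ m, n = m + 1 := ⟨n - 1, by omega⟩
  have ih := qInt_ge q hq n
  rw [qInt_succ q hq]
  have h1 := amgm (q ^ (n + 1)) (pow_pos hq.1 _)
  have h2 := amgm_lt q hq.1 hq.2
  have : (0 : ℝ) ≤ n := n.cast_nonneg
  push_cast
  nlinarith

lemma list_le (q : ℝ) (hq : q ∈ Set.Ioo (0 : ℝ) 1) (l : List ℕ) :
    0 < (l.map fun L : ℕ => (L + 1 : ℝ)).prod ∧
    (l.map fun L : ℕ => (L + 1 : ℝ)).prod ≤ (l.map fun L => qInt q (L + 1)).prod := by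
  induction l with
  | nil => simp
  | cons a l ih =>
    simp only [List.map_cons, List.prod_cons]
    have h := qInt_ge q hq a
    have : (0 : ℝ) < a + 1 := by positivity
    exact ⟨mul_pos this ih.1, mul_le_mul h ih.2 ih.1.le (this.le.trans h)⟩

lemma dimn_le (q : ℝ) (hq : q ∈ Set.Ioo (0 : ℝ) 1) (x : Word) : dimn x ≤ dimq q x := by
  rw [dimn_eq]; exact (list_le q hq _).2

lemma dimq_pos (q : ℝ) (hq : q ∈ Set.Ioo (0 : ℝ) 1) (x : Word) : 0 < dimq q x :=
  (dimn_pos x).trans_le (dimn_le q hq x)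

lemma dimn_lt (q : ℝ) (hq : q ∈ Set.Ioo (0 : ℝ) 1) (x : Word) (hx : x ≠ []) :
    dimn x < dimq q x := by
  cases x with
  | nil => exact absurd rfl hx
  | cons d x =>
    obtain ⟨k, ks, h, hk, -, -⟩ := block_cons x d
    simp only [dimn_eq, dimq, h, List.map_cons, List.prod_cons]
    have h1 := list_le q hq ks
    have h2 := qInt_gt q hq k hk
    have : (0 : ℝ) < k + 1 := by positivity
    exact mul_lt_mul h2 h1.2 h1.1 (this.le.trans h2.le)

/-! #### Fusion -/

/-- The list of words occurring in the fusion of `r.reverse` and `s`. -/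
def fl : Word → Word → List Word
  | [], s => [s]
  | c :: r, [] => [(c :: r).reverse]
  | c :: r, d :: s => (r.reverse ++ c :: d :: s) :: if d = !c then fl r s else []

lemma fl_sum : ∀ r s : Word, ((fl r s).map dimn).sum = dimn r.reverse * dimn s
  | [], s => by simp [fl, dimn_nil]
  | c :: r, [] => by simp [fl, dimn_nil]
  | c :: r, d :: s => by
    have h := fl_sum r s
    simp only [fl, List.map_cons, List.sum_cons, List.reverse_cons]
    rw [dimn_glue]
    split_ifs
    · rw [h]; ring
    · simp

/-- The set counted by `fuse`. -/
def fset (r s t : Word) : Set Word :=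
  {z : Word | ∃ r₀ s₀ : Word, r = r₀ ++ z ∧ s = bar z ++ s₀ ∧ t = r₀ ++ s₀}

lemma fset_finite (r s t : Word) : (fset r s t).Finite := by
  apply (List.finite_toSet r.tails).subset
  rintro z ⟨r₀, s₀, h, -, -⟩
  simp only [Set.mem_ofPred_eq, List.mem_tails]
  exact ⟨r₀, h.symm⟩

lemma fuse_eq (r s t : Word) : fuse r s t = (fset r s t).ncard := rfl

lemma bar_append (x y : Word) : bar (x ++ y) = bar y ++ bar x := by simp [bar]

lemma bar_bar (x : Word) : bar (bar x) = x := by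
  simp [bar, Function.comp_def]

lemma bar_length (x : Word) : (bar x).length = x.length := by simp [bar]

lemma fuse_le_nil (r s t : Word) (h : fset r s t ⊆ {[]}) (h' : fset r s t ≠ ∅ → t = r ++ s) :
    fuse r s t ≤ if r ++ s = t then 1 else 0 := by
  rw [fuse_eq]
  by_cases he : fset r s t = ∅
  · simp [he]
  · rw [if_pos (h' he).symm]
    calc _ ≤ ({[]} : Set Word).ncard := Set.ncard_le_ncard h (Set.finite_singleton _)
      _ = 1 := Set.ncard_singleton _

lemma fuse_le_count (t : Word) : ∀ r s : Word, fuse r.reverse s t ≤ (fl r s).count t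
  | [], s => by
    have := fuse_le_nil [] s t (by
      rintro z ⟨r₀, s₀, h, -, -⟩
      simp at h; simp [h.2]) (by
      intro h
      obtain ⟨z, r₀, s₀, h1, h2, h3⟩ := Set.nonempty_iff_ne_empty.2 h
      simp at h1
      simp_all [bar])
    simpa [fl, List.count_cons] using this
  | c :: r, [] => by
    have := fuse_le_nil (c :: r).reverse [] t (by
      rintro z ⟨r₀, s₀, -, h, -⟩
      simp [bar] at h; simp [h.1]) (by
      intro h
      obtain ⟨z, r₀, s₀, h1, h2, h3⟩ := Set.nonempty_iff_ne_empty.2 h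
      simp [bar] at h2
      rw [h1, h3, h2.1, h2.2]; simp)
    simpa [fl, List.count_cons] using this
  | c :: r, d :: s => by
    have ih := fuse_le_count t r s
    have key : fset (c :: r).reverse (d :: s) t ⊆
        (if r.reverse ++ c :: d :: s = t then {[]} else ∅) ∪
        (if d = !c then (fun z => z ++ [c]) '' fset r.reverse s t else ∅) := by
      rintro z ⟨r₀, s₀, h1, h2, h3⟩
      rcases List.eq_nil_or_concat z with rfl | ⟨z', c', rfl⟩
      · left
        simp [bar] at h1 h2
        rw [h3, ← h1, ← h2]
        simp
      · right
        simp only [List.concat_eq_append] at h1 h2 ⊢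
        rw [List.reverse_cons, ← List.append_assoc] at h1
        obtain ⟨hh, hc⟩ := List.append_inj' h1 rfl
        simp only [List.cons.injEq, and_true] at hc
        subst hc
        rw [bar_append] at h2
        have e : bar [c] = [!c] := by simp [bar]
        rw [e] at h2
        simp only [List.cons_append, List.nil_append, List.cons.injEq] at h2
        rw [if_pos h2.1]
        exact ⟨z', ⟨r₀, s₀, hh, h2.2, h3⟩, rfl⟩
    have h1 : fuse (c :: r).reverse (d :: s) t ≤ _ :=
      (Set.ncard_le_ncard key (by
        apply Set.Finite.union
        · split_ifs <;> simp
        · split_ifs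
          · exact (fset_finite _ _ _).image _
          · simp)).trans (Set.ncard_union_le _ _)
    refine h1.trans ?_
    rw [fl, List.count_cons, add_comm]
    apply add_le_add
    · split_ifs with h
      · exact (Set.ncard_image_le (fset_finite _ _ _)).trans ih
      · simp
    · by_cases h : r.reverse ++ c :: d :: s = t
      · simp [h]
      · simp [h]

lemma fuse_frob (r s t : Word) : fuse r s t ≤ fuse (bar r) t s := by
  rw [fuse_eq, fuse_eq]
  refine Set.ncard_le_ncard_of_injOn (fun z => bar (r.take (r.length - z.length))) ?_ ?_
    (fset_finite _ _ _)
  · rintro z ⟨r₀, s₀, rfl, rfl, rfl⟩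
    have : (r₀ ++ z).take ((r₀ ++ z).length - z.length) = r₀ := by simp
    simp only [this]
    exact ⟨bar z, s₀, bar_append _ _, by rw [bar_bar], rfl⟩
  · rintro z ⟨r₀, s₀, h, -, -⟩ z' ⟨r₁, s₁, h', -, -⟩ hz
    have h1 := congrArg List.length hz
    simp only [bar_length, List.length_take] at h1
    have l1 := congrArg List.length h
    have l2 := congrArg List.length h'
    rw [List.length_append] at l1 l2
    rw [h] at h'
    exact (List.append_inj' h' (by omega)).2

lemma tsum_count (L : List Word) (f : Word → ℝ≥0∞) :
    ∑' t, (L.count t : ℝ≥0∞) * f t = (L.map f).sum := by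
  induction L with
  | nil => simp
  | cons a L ih =>
    have : ∀ t, ((a :: L).count t : ℝ≥0∞) * f t = (L.count t : ℝ≥0∞) * f t
        + if t = a then f a else 0 := by
      intro t
      rw [List.count_cons]
      by_cases h : t = a
      · subst h; simp; ring
      · have h' : a ≠ t := fun e => h e.symm
        simp [h, h']
    simp_rw [this]
    rw [ENNReal.tsum_add, ih, tsum_ite_eq]
    simp [add_comm]

lemma ofReal_list_sum (L : List Word) :
    (L.map fun t => ENNReal.ofReal (dimn t)).sum = ENNReal.ofReal (L.map dimn).sum := by
  induction L with
  | nil => simp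
  | cons a L ih =>
    simp only [List.map_cons, List.sum_cons]
    rw [ih, ENNReal.ofReal_add (dimn_pos a).le]
    apply List.sum_nonneg
    intro x hx
    obtain ⟨y, -, rfl⟩ := List.mem_map.1 hx
    exact (dimn_pos y).le

lemma fuse_sum (r s : Word) :
    ∑' t, (fuse r s t : ℝ≥0∞) * ENNReal.ofReal (dimn t) ≤ ENNReal.ofReal (dimn r * dimn s) := by
  calc _ ≤ ∑' t, ((fl r.reverse s).count t : ℝ≥0∞) * ENNReal.ofReal (dimn t) := by
        apply ENNReal.tsum_le_tsum
        intro t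
        gcongr
        have := fuse_le_count t r.reverse s
        rwa [List.reverse_reverse] at this
    _ = _ := by
        rw [tsum_count, ofReal_list_sum, fl_sum, List.reverse_reverse]

lemma fuse_sum' (r t : Word) :
    ∑' s, (fuse r s t : ℝ≥0∞) * ENNReal.ofReal (dimn s) ≤ ENNReal.ofReal (dimn r * dimn t) := by
  refine le_trans ?_ ((fuse_sum (bar r) t).trans_eq (by rw [dimn_bar]))
  apply ENNReal.tsum_le_tsum
  intro s
  gcongr
  exact fuse_frob r s t

/-! #### One-step bounds -/

/-- The constant `λ`. -/
noncomputable def lam (q : ℝ) (μ : Word → ℝ) : ℝ := ∑' r, μ r * dimn r / dimq q r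

lemma ofReal_tsum_fin (μ : Word → ℝ) (hμ : IsProbMeasure μ) (g : Word → ℝ) (hg : ∀ r, 0 ≤ g r) :
    ENNReal.ofReal (∑' r, μ r * g r) = ∑' r, ENNReal.ofReal (μ r * g r) := by
  apply ENNReal.ofReal_tsum_of_nonneg
  · intro r; exact mul_nonneg (hμ.1 r) (hg r)
  · apply summable_of_hasFiniteSupport
    exact hμ.2.1.subset (fun r hr h => hr (by simp [h]))

lemma lam_ofReal (q : ℝ) (hq : q ∈ Set.Ioo (0 : ℝ) 1) (μ : Word → ℝ) (hμ : IsProbMeasure μ) :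
    ENNReal.ofReal (lam q μ) = ∑' r, ENNReal.ofReal (μ r * (dimn r / dimq q r)) := by
  rw [← ofReal_tsum_fin μ hμ _ (fun r => div_nonneg (dimn_pos r).le (dimq_pos q hq r).le)]
  simp only [lam, mul_div_assoc]

lemma pMu_ofReal (q : ℝ) (hq : q ∈ Set.Ioo (0 : ℝ) 1) (μ : Word → ℝ) (hμ : IsProbMeasure μ)
    (s t : Word) :
    ENNReal.ofReal (pMu q μ s t) =
      ∑' r, ENNReal.ofReal (μ r / dimq q r) * fuse r s t * ENNReal.ofReal (dimq q t / dimq q s) := by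
  have : pMu q μ s t = ∑' r, μ r * (fuse r s t * dimq q t / (dimq q r * dimq q s)) := by
    simp only [pMu]
    congr 1; ext r; ring
  rw [this, ofReal_tsum_fin μ hμ]
  · congr 1; ext r
    have h1 := dimq_pos q hq r
    have h2 := dimq_pos q hq s
    have h3 := dimq_pos q hq t
    have h4 := hμ.1 r
    rw [← ENNReal.ofReal_natCast, ← ENNReal.ofReal_mul (by positivity),
      ← ENNReal.ofReal_mul (by positivity)]
    congr 1
    field_simp
  · intro r
    have h1 := dimq_pos q hq r
    have h2 := dimq_pos q hq s
    have h3 := dimq_pos q hq t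
    positivity

lemma step1 (q : ℝ) (hq : q ∈ Set.Ioo (0 : ℝ) 1) (μ : Word → ℝ) (hμ : IsProbMeasure μ)
    (s : Word) :
    ∑' t, ENNReal.ofReal (pMu q μ s t) * ENNReal.ofReal (dimn t / dimq q t) ≤
      ENNReal.ofReal (lam q μ) * ENNReal.ofReal (dimn s / dimq q s) := by
  simp_rw [pMu_ofReal q hq μ hμ, lam_ofReal q hq μ hμ, ← ENNReal.tsum_mul_right]
  rw [ENNReal.tsum_comm]
  apply ENNReal.tsum_le_tsum
  intro r
  have hr := dimq_pos q hq r
  have hs := dimq_pos q hq s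
  have hr' := dimn_pos r
  have hs' := dimn_pos s
  have hm := hμ.1 r
  calc _ = ∑' t, ENNReal.ofReal (μ r / dimq q r / dimq q s) *
        (fuse r s t * ENNReal.ofReal (dimn t)) := by
        congr 1; ext t
        have ht := dimq_pos q hq t
        have ht' := dimn_pos t
        rw [← ENNReal.ofReal_natCast, ← ENNReal.ofReal_mul (by positivity),
          ← ENNReal.ofReal_mul (by positivity), ← ENNReal.ofReal_mul (by positivity),
          ← ENNReal.ofReal_mul (by positivity), ← ENNReal.ofReal_mul (by positivity)]
        congr 1
        field_simp
    _ ≤ ENNReal.ofReal (μ r / dimq q r / dimq q s) * ENNReal.ofReal (dimn r * dimn s) := by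
        rw [ENNReal.tsum_mul_left]
        gcongr
        exact fuse_sum r s
    _ = _ := by
        rw [← ENNReal.ofReal_mul (by positivity), ← ENNReal.ofReal_mul (by positivity)]
        congr 1
        field_simp

lemma step2 (q : ℝ) (hq : q ∈ Set.Ioo (0 : ℝ) 1) (μ : Word → ℝ) (hμ : IsProbMeasure μ)
    (t : Word) :
    ∑' s, ENNReal.ofReal (dimn s * dimq q s) * ENNReal.ofReal (pMu q μ s t) ≤
      ENNReal.ofReal (lam q μ) * ENNReal.ofReal (dimn t * dimq q t) := by
  simp_rw [pMu_ofReal q hq μ hμ, lam_ofReal q hq μ hμ, ← ENNReal.tsum_mul_right,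
    ← ENNReal.tsum_mul_left]
  rw [ENNReal.tsum_comm]
  apply ENNReal.tsum_le_tsum
  intro r
  have hr := dimq_pos q hq r
  have ht := dimq_pos q hq t
  have hr' := dimn_pos r
  have ht' := dimn_pos t
  have hm := hμ.1 r
  calc _ = ∑' s, ENNReal.ofReal (μ r / dimq q r * dimq q t) *
        (fuse r s t * ENNReal.ofReal (dimn s)) := by
        congr 1; ext s
        have hs := dimq_pos q hq s
        have hs' := dimn_pos s
        rw [← ENNReal.ofReal_natCast, ← ENNReal.ofReal_mul (by positivity),
          ← ENNReal.ofReal_mul (by positivity), ← ENNReal.ofReal_mul (by positivity),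
          ← ENNReal.ofReal_mul (by positivity), ← ENNReal.ofReal_mul (by positivity)]
        congr 1
        field_simp
    _ ≤ ENNReal.ofReal (μ r / dimq q r * dimq q t) * ENNReal.ofReal (dimn r * dimn t) := by
        rw [ENNReal.tsum_mul_left]
        gcongr
        exact fuse_sum' r t
    _ = _ := by
        rw [← ENNReal.ofReal_mul (by positivity), ← ENNReal.ofReal_mul (by positivity)]
        congr 1
        field_simp

/-! #### Iteration -/

lemma nStep_zero {X : Type*} [DecidableEq X] (a : X → X → ℝ) (s t : X) :
    nStepE Set.univ a 0 s t ≤ if t = s then 1 else 0 := by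
  unfold nStepE
  have hsub : Subsingleton (pathSet Set.univ 0 s t) := by
    constructor
    rintro ⟨σ, h⟩ ⟨τ, h'⟩
    apply Subtype.ext
    funext i
    have : i = 0 := Fin.ext (by omega)
    subst this
    exact h.1.trans h'.1.symm
  split_ifs with h
  · have : ∀ σ : pathSet Set.univ 0 s t, weightE a 0 σ.1 = 1 := by
      intro σ; simp [weightE]
    simp_rw [this]
    rcases isEmpty_or_nonempty (pathSet Set.univ 0 s t) with he | ⟨⟨x⟩⟩
    · simp
    · rw [tsum_eq_single x (fun y hy => absurd (Subsingleton.elim y x) hy)]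
  · have : IsEmpty (pathSet Set.univ 0 s t) := by
      constructor
      rintro ⟨σ, h1, h2, -⟩
      exact h (h2.symm.trans h1)
    simp

lemma nStep_succ {X : Type*} (a : X → X → ℝ) (n : ℕ) (s t : X) :
    nStepE Set.univ a (n + 1) s t ≤
      ∑' v, ENNReal.ofReal (a s v) * nStepE Set.univ a n v t := by
  unfold nStepE
  simp_rw [← ENNReal.tsum_mul_left]
  rw [← ENNReal.tsum_sigma' (β := fun v => pathSet Set.univ n v t)
    (f := fun p => ENNReal.ofReal (a s p.1) * weightE a n p.2.1)]
  let φ : pathSet Set.univ (n + 1) s t → Σ v, pathSet Set.univ n v t := fun σ =>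
    ⟨σ.1 1, ⟨fun i => σ.1 i.succ, by
      refine ⟨rfl, ?_, fun i => trivial⟩
      simpa using σ.2.2.1⟩⟩
  have hφ : Function.Injective φ := by
    intro σ τ h
    apply Subtype.ext
    have h2 : ∀ i, (φ σ).2.1 i = (φ τ).2.1 i := by rw [h]; intro i; rfl
    funext i
    refine Fin.cases ?_ (fun j => h2 j) i
    exact σ.2.1.trans τ.2.1.symm
  refine le_trans (le_of_eq ?_) (ENNReal.tsum_comp_le_tsum_of_injective hφ _)
  congr 1; ext σ
  simp only [weightE, φ, Fin.prod_univ_succ (n := n)]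
  congr 1
  rw [Fin.castSucc_zero, σ.2.1]
  rfl

lemma iter1 {X : Type*} [DecidableEq X] (a : X → X → ℝ) (w : X → ℝ≥0∞) (l : ℝ≥0∞)
    (h : ∀ s, ∑' t, ENNReal.ofReal (a s t) * w t ≤ l * w s) (n : ℕ) :
    ∀ s, ∑' t, nStepE Set.univ a n s t * w t ≤ l ^ n * w s := by
  induction n with
  | zero =>
    intro s
    calc _ ≤ ∑' t, if t = s then w s else 0 := by
          apply ENNReal.tsum_le_tsum
          intro t
          refine (mul_le_mul_left (nStep_zero a s t) _).trans ?_
          split_ifs with h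
          · simp [h]
          · simp
      _ = _ := by simp
  | succ n ih =>
    intro s
    calc _ ≤ ∑' t, ∑' v, ENNReal.ofReal (a s v) * (nStepE Set.univ a n v t * w t) := by
          apply ENNReal.tsum_le_tsum
          intro t
          refine (mul_le_mul_left (nStep_succ a n s t) _).trans ?_
          rw [← ENNReal.tsum_mul_right]
          simp_rw [mul_assoc]
          exact le_rfl
      _ = ∑' v, ENNReal.ofReal (a s v) * ∑' t, nStepE Set.univ a n v t * w t := by
          rw [ENNReal.tsum_comm]
          simp_rw [ENNReal.tsum_mul_left]
      _ ≤ ∑' v, l ^ n * (ENNReal.ofReal (a s v) * w v) := by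
          apply ENNReal.tsum_le_tsum
          intro v
          refine (mul_le_mul_right (ih v) _).trans (le_of_eq ?_)
          ring
      _ ≤ l ^ n * (l * w s) := by
          rw [ENNReal.tsum_mul_left]
          gcongr
          exact h s
      _ = _ := by ring

lemma iter2 {X : Type*} [DecidableEq X] (a : X → X → ℝ) (w : X → ℝ≥0∞) (l : ℝ≥0∞)
    (h : ∀ t, ∑' s, w s * ENNReal.ofReal (a s t) ≤ l * w t) (n : ℕ) :
    ∀ t, ∑' s, w s * nStepE Set.univ a n s t ≤ l ^ n * w t := by
  induction n with
  | zero =>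
    intro t
    calc _ ≤ ∑' s, if s = t then w t else 0 := by
          apply ENNReal.tsum_le_tsum
          intro s
          refine (mul_le_mul_right (nStep_zero a s t) _).trans ?_
          by_cases h : s = t
          · simp [h]
          · have h' : t ≠ s := fun e => h e.symm
            simp [h, h']
      _ = _ := by simp
  | succ n ih =>
    intro t
    calc _ ≤ ∑' s, ∑' v, (w s * ENNReal.ofReal (a s v)) * nStepE Set.univ a n v t := by
          apply ENNReal.tsum_le_tsum
          intro s
          refine (mul_le_mul_right (nStep_succ a n s t) _).trans ?_
          rw [← ENNReal.tsum_mul_left]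
          simp_rw [mul_assoc]
          exact le_rfl
      _ = ∑' v, (∑' s, w s * ENNReal.ofReal (a s v)) * nStepE Set.univ a n v t := by
          rw [ENNReal.tsum_comm]
          simp_rw [ENNReal.tsum_mul_right]
      _ ≤ ∑' v, l * (w v * nStepE Set.univ a n v t) := by
          apply ENNReal.tsum_le_tsum
          intro v
          refine (mul_le_mul_left (h v) _).trans (le_of_eq ?_)
          ring
      _ ≤ l * (l ^ n * w t) := by
          rw [ENNReal.tsum_mul_left]
          gcongr
          exact ih t
      _ = _ := by ring

lemma lam_nonneg (q : ℝ) (hq : q ∈ Set.Ioo (0 : ℝ) 1) (μ : Word → ℝ) (hμ : IsProbMeasure μ) :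
    0 ≤ lam q μ :=
  tsum_nonneg fun r => div_nonneg (mul_nonneg (hμ.1 r) (dimn_pos r).le) (dimq_pos q hq r).le

lemma main_bound (q : ℝ) (hq : q ∈ Set.Ioo (0 : ℝ) 1) (μ : Word → ℝ) (hμ : IsProbMeasure μ)
    (n : ℕ) (s t : Word) :
    nStepE Set.univ (pMu q μ) n s t ≤ ENNReal.ofReal (lam q μ ^ n * dimq q t / dimq q s) := by
  have h1 := (ENNReal.le_tsum t).trans (iter1 (pMu q μ) (fun t => ENNReal.ofReal (dimn t / dimq q t))
    (ENNReal.ofReal (lam q μ)) (step1 q hq μ hμ) n s)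
  have h2 := (ENNReal.le_tsum s).trans (iter2 (pMu q μ) (fun t => ENNReal.ofReal (dimn t * dimq q t))
    (ENNReal.ofReal (lam q μ)) (step2 q hq μ hμ) n t)
  have hl := lam_nonneg q hq μ hμ
  have ds := dimq_pos q hq s
  have dt := dimq_pos q hq t
  have us := dimn_pos s
  have ut := dimn_pos t
  rw [← ENNReal.ofReal_pow hl, ← ENNReal.ofReal_mul (by positivity)] at h1 h2
  generalize nStepE Set.univ (pMu q μ) n s t = P at h1 h2 ⊢
  have hP : P ≠ ⊤ := by
    rintro rfl
    rw [ENNReal.top_mul (by simp; positivity)] at h1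
    exact absurd h1 (by simp)
  lift P to NNReal using hP
  rw [← ENNReal.ofReal_coe_nnreal] at h1 h2 ⊢
  rw [← ENNReal.ofReal_mul (by positivity)] at h1 h2
  rw [ENNReal.ofReal_le_ofReal_iff (by positivity)] at h1 h2 ⊢
  have hp : (0 : ℝ) ≤ P := P.2
  have hln : 0 ≤ lam q μ ^ n := by positivity
  generalize lam q μ ^ n = l at *
  generalize (P : ℝ) = p at *
  rw [mul_div_assoc', mul_div_assoc', div_le_div_iff₀ dt ds] at h1
  rw [le_div_iff₀ ds]
  rcases le_total (dimn s) (dimn t) with h | h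
  · apply le_of_mul_le_mul_right _ ut
    calc _ = p * dimn t * dimq q s := by ring
      _ ≤ l * dimn s * dimq q t := h1
      _ = l * dimq q t * dimn s := by ring
      _ ≤ _ := by gcongr
  · apply le_of_mul_le_mul_right _ us
    calc _ = dimn s * dimq q s * p := by ring
      _ ≤ l * (dimn t * dimq q t) := h2
      _ = l * dimq q t * dimn t := by ring
      _ ≤ _ := by gcongr

lemma lam_lt (q : ℝ) (hq : q ∈ Set.Ioo (0 : ℝ) 1) (μ : Word → ℝ) (hμ : IsProbMeasure μ)
    (h : μ [] < 1) : lam q μ < 1 := by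
  have sμ : Summable μ := summable_of_hasFiniteSupport hμ.2.1
  obtain ⟨r, hr, hr'⟩ : ∃ r, r ≠ [] ∧ 0 < μ r := by
    by_contra! hc
    have : ∑' x, μ x = μ [] := tsum_eq_single [] fun r hr => le_antisymm (hc r hr) (hμ.1 r)
    rw [hμ.2.2] at this
    linarith
  rw [← hμ.2.2]
  have key : ∀ r, μ r * dimn r / dimq q r ≤ μ r := by
    intro r
    rw [div_le_iff₀ (dimq_pos q hq r)]
    exact mul_le_mul_of_nonneg_left (dimn_le q hq r) (hμ.1 r)
  refine Summable.tsum_lt_tsum (i := r) key ?_ ?_ sμ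
  · rw [div_lt_iff₀ (dimq_pos q hq r)]
    exact mul_lt_mul_of_pos_left (dimn_lt q hq r hr) hr'
  · exact Summable.of_nonneg_of_le
      (fun r => div_nonneg (mul_nonneg (hμ.1 r) (dimn_pos r).le) (dimq_pos q hq r).le) key sμ

end helpers

/-- Lemma 4.1 together with the subsequent Remark: the `n`-step kernel satisfies
`p_μ⁽ⁿ⁾(s,t) ≤ λⁿ dim_q(t)/dim_q(s)` with `λ = Σ_r μ(r) dim(r)/dim_q(r)`; in particular,
if `μ(e) < 1` then `λ < 1` and the spectral radius of the random walk is at most `λ`. -/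
theorem lem_4_1_remark (q : ℝ) (hq : q ∈ Set.Ioo (0 : ℝ) 1) (μ : Word → ℝ)
    (hμ : IsProbMeasure μ) :
    (∀ (n : ℕ) (s t : Word),
      nStepE Set.univ (pMu q μ) n s t ≤
        ENNReal.ofReal ((∑' r, μ r * dimn r / dimq q r) ^ n * dimq q t / dimq q s)) ∧
    (μ [] < 1 →
      (∑' r, μ r * dimn r / dimq q r) < 1 ∧
      ∀ s : Word,
        Filter.limsup
            (fun n : ℕ => (nStepE Set.univ (pMu q μ) n s s).toReal ^ ((n : ℝ)⁻¹))
            Filter.atTop ≤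
          ∑' r, μ r * dimn r / dimq q r) := by
  change (∀ (n : ℕ) (s t : Word), nStepE Set.univ (pMu q μ) n s t ≤
    ENNReal.ofReal (lam q μ ^ n * dimq q t / dimq q s)) ∧ (μ [] < 1 → lam q μ < 1 ∧
      ∀ s : Word, Filter.limsup
        (fun n : ℕ => (nStepE Set.univ (pMu q μ) n s s).toReal ^ ((n : ℝ)⁻¹))
            Filter.atTop ≤ lam q μ)
  refine ⟨main_bound q hq μ hμ, fun h => ⟨lam_lt q hq μ hμ h, fun s => ?_⟩⟩
  have hl := lam_nonneg q hq μ hμ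
  apply Filter.limsup_le_of_le
  · exact Filter.isCoboundedUnder_le_of_le Filter.atTop (x := 0)
      (fun n => Real.rpow_nonneg ENNReal.toReal_nonneg _)
  · filter_upwards [Filter.eventually_ge_atTop 1] with n hn
    have hb := main_bound q hq μ hμ n s s
    rw [mul_div_assoc, div_self (dimq_pos q hq s).ne', mul_one] at hb
    have hb' : (nStepE Set.univ (pMu q μ) n s s).toReal ≤ lam q μ ^ n :=
      ENNReal.toReal_le_of_le_ofReal (by positivity) hb
    calc _ ≤ (lam q μ ^ n) ^ ((n : ℝ)⁻¹) := by
          apply Real.rpow_le_rpow ENNReal.toReal_nonneg hb' (by positivity)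
      _ = lam q μ := Real.pow_rpow_inv_natCast hl (by omega)

end Paper
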